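/- In the MM-SPIR model with the reliability, query-determinism, answer-determinism, and database-privacy constraints, for every size-P subset 𝒫 of {1,…,K}, every index i ∈ {1,…,K} with i ∉ 𝒫, every subset T ⊆ 𝒫, and every database index n ∈ {1,…,N}: H(W_i | W_T, Q_n^{[𝒫]}) = H(W_i | A_n^{[𝒫]}, W_T, Q_n^{[𝒫]}); equivalently, I(W_i; A_n^{[𝒫]} | W_T, Q_n^{[𝒫]}) = 0. -/

import Mathlib

open Finset

namespace MMSPIR

variable {Ω : Type} [Fintype Ω]

/-- Probability that the random variable `X` takes the value `v`,
under the weight function `p` on the finite sample space `Ω`. -/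
noncomputable def prob (p : Ω → ℝ) {V : Type} [DecidableEq V] (X : Ω → V) (v : V) : ℝ :=
  ∑ ω ∈ Finset.univ.filter (fun ω => X ω = v), p ω

/-- Shannon entropy of `X`, with logarithm taken to base `q`. -/
noncomputable def ent (q : ℕ) (p : Ω → ℝ) {V : Type} [Fintype V] [DecidableEq V]
    (X : Ω → V) : ℝ :=
  -∑ v : V, prob p X v * Real.logb q (prob p X v)

/-- Conditional entropy `H(X | Y)`, base `q`. -/
noncomputable def cent (q : ℕ) (p : Ω → ℝ) {V W : Type} [Fintype V] [DecidableEq V]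
    [Fintype W] [DecidableEq W] (X : Ω → V) (Y : Ω → W) : ℝ :=
  ent q p (fun ω => (X ω, Y ω)) - ent q p Y

/-- Mutual information `I(X ; Y)`, base `q`. -/
noncomputable def mi (q : ℕ) (p : Ω → ℝ) {V W : Type} [Fintype V] [DecidableEq V]
    [Fintype W] [DecidableEq W] (X : Ω → V) (Y : Ω → W) : ℝ :=
  ent q p X + ent q p Y - ent q p (fun ω => (X ω, Y ω))

/-- Conditional mutual information `I(X ; Y | Z)`, base `q`. -/
noncomputable def cmi (q : ℕ) (p : Ω → ℝ) {U V W : Type} [Fintype U] [DecidableEq U]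
    [Fintype V] [DecidableEq V] [Fintype W] [DecidableEq W]
    (X : Ω → U) (Y : Ω → V) (Z : Ω → W) : ℝ :=
  cent q p X Z + cent q p Y Z - cent q p (fun ω => (X ω, Y ω)) Z

/-- `X` and `Y` have the same distribution. -/
def IdentDist (p : Ω → ℝ) {V : Type} [DecidableEq V] (X Y : Ω → V) : Prop :=
  ∀ v, prob p X v = prob p Y v

section helpers

variable {Ω : Type} [Fintype Ω]

lemma sum_prob_mul (p : Ω → ℝ) {V : Type} [Fintype V] [DecidableEq V] (X : Ω → V) (g : V → ℝ) :
    ∑ v, prob p X v * g v = ∑ ω, p ω * g (X ω) := by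
  unfold prob
  rw [← Finset.sum_fiberwise (s := Finset.univ) (g := X)]
  refine Finset.sum_congr rfl fun v _ => ?_
  rw [Finset.sum_mul]
  refine Finset.sum_congr rfl fun ω hω => ?_
  rw [(Finset.mem_filter.1 hω).2]

lemma ent_eq (q : ℕ) (p : Ω → ℝ) {V : Type} [Fintype V] [DecidableEq V] (X : Ω → V) :
    ent q p X = -∑ ω, p ω * Real.logb q (prob p X (X ω)) := by
  unfold ent
  rw [sum_prob_mul p X (fun v => Real.logb q (prob p X v))]

lemma ent_congr (q : ℕ) (p : Ω → ℝ) {V V' : Type} [Fintype V] [DecidableEq V]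
    [Fintype V'] [DecidableEq V'] (X : Ω → V) (Y : Ω → V')
    (h : ∀ a b, X a = X b ↔ Y a = Y b) : ent q p X = ent q p Y := by
  rw [ent_eq, ent_eq]
  simp only [prob, h]

lemma prob_nonneg (p : Ω → ℝ) (hp0 : ∀ ω, 0 ≤ p ω) {V : Type} [DecidableEq V]
    (X : Ω → V) (v : V) : 0 ≤ prob p X v := Finset.sum_nonneg fun _ _ => hp0 _

lemma prob_pos (p : Ω → ℝ) (hp0 : ∀ ω, 0 ≤ p ω) {V : Type} [DecidableEq V]
    (X : Ω → V) (ω : Ω) (h : 0 < p ω) : 0 < prob p X (X ω) :=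
  lt_of_lt_of_le h (Finset.single_le_sum (f := p) (fun _ _ => hp0 _) (by simp))

lemma sum_prob_pair (p : Ω → ℝ) {V V' : Type} [Fintype V] [DecidableEq V]
    [DecidableEq V'] (X : Ω → V) (Z : Ω → V') (z : V') :
    ∑ x, prob p (fun ω => (X ω, Z ω)) (x, z) = prob p Z z := by
  unfold prob
  rw [← Finset.sum_fiberwise (s := Finset.univ.filter (fun ω => Z ω = z)) (g := X)]
  refine Finset.sum_congr rfl fun v _ => ?_
  rw [Finset.filter_filter]
  refine Finset.sum_congr ?_ fun _ _ => rfl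
  ext ω
  simp [and_comm]

lemma sum_prob (p : Ω → ℝ) {V : Type} [Fintype V] [DecidableEq V] (X : Ω → V) :
    ∑ v, prob p X v = ∑ ω, p ω := by
  simpa using sum_prob_mul p X (fun _ => 1)

lemma submod (q : ℕ) (hq : 1 < q) (p : Ω → ℝ) (hp0 : ∀ ω, 0 ≤ p ω) (hp1 : (∑ ω, p ω) = 1)
    {U V T : Type} [Fintype U] [DecidableEq U] [Fintype V] [DecidableEq V]
    [Fintype T] [DecidableEq T] (X : Ω → U) (Y : Ω → V) (Z : Ω → T) :
    ent q p (fun ω => (X ω, Y ω, Z ω)) + ent q p Z ≤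
      ent q p (fun ω => (X ω, Z ω)) + ent q p (fun ω => (Y ω, Z ω)) := by
  have hlq : 0 < Real.log q := Real.log_pos (by exact_mod_cast hq)
  set a := prob p (fun ω => (X ω, Y ω, Z ω)) with ha
  set b := prob p (fun ω => (X ω, Z ω)) with hb
  set c := prob p (fun ω => (Y ω, Z ω)) with hc
  set d := prob p Z with hd
  have ha0 : ∀ v, 0 ≤ a v := prob_nonneg p hp0 _
  have hb0 : ∀ v, 0 ≤ b v := prob_nonneg p hp0 _
  have hc0 : ∀ v, 0 ≤ c v := prob_nonneg p hp0 _
  have hd0 : ∀ v, 0 ≤ d v := prob_nonneg p hp0 _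
  set r : U × V × T → ℝ := fun t => b (t.1, t.2.2) * c (t.2.1, t.2.2) / (a t * d t.2.2) with hr
  have hsum : ∑ ω, p ω * r (X ω, Y ω, Z ω) ≤ 1 := by
    rw [← sum_prob_mul p (fun ω => (X ω, Y ω, Z ω)) r, ← ha]
    calc ∑ t, a t * r t ≤ ∑ t : U × V × T, b (t.1, t.2.2) * c (t.2.1, t.2.2) / d t.2.2 := by
          refine Finset.sum_le_sum fun t _ => ?_
          have h0 : 0 ≤ b (t.1, t.2.2) * c (t.2.1, t.2.2) / d t.2.2 :=
            div_nonneg (mul_nonneg (hb0 _) (hc0 _)) (hd0 _)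
          rcases eq_or_lt_of_le (ha0 t) with h | h
          · rw [← h, zero_mul]; exact h0
          · simp only [hr]
            rw [mul_comm (a t) (d _), ← div_div, mul_div_cancel₀ _ h.ne']
      _ = ∑ z, (∑ x, b (x, z)) * (∑ y, c (y, z)) / d z := by
          rw [Fintype.sum_prod_type]
          simp_rw [Fintype.sum_prod_type]
          simp_rw [Finset.sum_mul_sum, Finset.sum_div]
          conv_rhs => rw [Finset.sum_comm]
          refine Finset.sum_congr rfl fun x _ => ?_
          conv_rhs => rw [Finset.sum_comm]
      _ ≤ ∑ z, d z := by
          refine Finset.sum_le_sum fun z _ => ?_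
          rw [hb, hc, sum_prob_pair, sum_prob_pair, ← hd]
          exact (mul_self_div_self _).le
      _ = 1 := by rw [hd, sum_prob, hp1]
  have hpt : ∀ ω, p ω * (1 - r (X ω, Y ω, Z ω)) ≤
      p ω * (Real.log (a (X ω, Y ω, Z ω)) + Real.log (d (Z ω))
        - Real.log (b (X ω, Z ω)) - Real.log (c (Y ω, Z ω))) := by
    intro ω
    rcases eq_or_lt_of_le (hp0 ω) with h | h
    · simp [← h]
    refine mul_le_mul_of_nonneg_left ?_ h.le
    have h1 : 0 < a (X ω, Y ω, Z ω) := prob_pos p hp0 (fun ω => (X ω, Y ω, Z ω)) ω h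
    have h2 : 0 < b (X ω, Z ω) := prob_pos p hp0 (fun ω => (X ω, Z ω)) ω h
    have h3 : 0 < c (Y ω, Z ω) := prob_pos p hp0 (fun ω => (Y ω, Z ω)) ω h
    have h4 : 0 < d (Z ω) := prob_pos p hp0 Z ω h
    have h5 : 0 < r (X ω, Y ω, Z ω) := div_pos (mul_pos h2 h3) (mul_pos h1 h4)
    have h6 := Real.log_le_sub_one_of_pos h5
    have h7 : Real.log (r (X ω, Y ω, Z ω)) = Real.log (b (X ω, Z ω)) + Real.log (c (Y ω, Z ω))
        - (Real.log (a (X ω, Y ω, Z ω)) + Real.log (d (Z ω))) := by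
      simp only [hr]
      rw [Real.log_div (mul_pos h2 h3).ne' (mul_pos h1 h4).ne', Real.log_mul h2.ne' h3.ne',
        Real.log_mul h1.ne' h4.ne']
    linarith
  have htot := Finset.sum_le_sum (s := Finset.univ) fun ω _ => hpt ω
  simp only [mul_sub, mul_add, Finset.sum_sub_distrib, Finset.sum_add_distrib, mul_one, hp1]
    at htot
  rw [ent_eq, ent_eq, ent_eq, ent_eq]
  simp only [← ha, ← hb, ← hc, ← hd, Real.logb, ← mul_div_assoc, ← Finset.sum_div]
  rw [← neg_div, ← neg_div, ← neg_div, ← neg_div, ← add_div, ← add_div]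
  refine div_le_div_of_nonneg_right ?_ hlq.le
  linarith

lemma ent_mono (q : ℕ) (hq : 1 < q) (p : Ω → ℝ) (hp0 : ∀ ω, 0 ≤ p ω) (hp1 : (∑ ω, p ω) = 1)
    {U V : Type} [Fintype U] [DecidableEq U] [Fintype V] [DecidableEq V]
    (X : Ω → U) (Y : Ω → V) (h : ∀ a b, X a = X b → Y a = Y b) : ent q p Y ≤ ent q p X := by
  have h1 := submod q hq p hp0 hp1 X X Y
  have h2 : ent q p (fun ω => (X ω, Y ω)) = ent q p X := by
    refine ent_congr q p _ _ fun a b => ?_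
    have := h a b
    simp only [Prod.mk.injEq]; tauto
  have h3 : ent q p (fun ω => (X ω, X ω, Y ω)) = ent q p X := by
    refine ent_congr q p _ _ fun a b => ?_
    have := h a b
    simp only [Prod.mk.injEq]; tauto
  linarith

lemma ent_unit (q : ℕ) (p : Ω → ℝ) (hp1 : (∑ ω, p ω) = 1) :
    ent q p (fun _ : Ω => ()) = 0 := by
  rw [ent_eq]
  simp [prob, hp1]

lemma indep_key (q : ℕ) (hq : 1 < q) (p : Ω → ℝ) (hp0 : ∀ ω, 0 ≤ p ω) (hp1 : (∑ ω, p ω) = 1)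
    {U U' V T : Type} [Fintype U] [DecidableEq U] [Fintype U'] [DecidableEq U']
    [Fintype V] [DecidableEq V] [Fintype T] [DecidableEq T]
    (X : Ω → U) (X' : Ω → U') (Y : Ω → V) (Z : Ω → T)
    (hX : ∀ a b, X a = X b → X' a = X' b) (hmi : mi q p X Y = 0)
    (hZ : ent q p (fun ω => (Z ω, Y ω)) ≤ ent q p Y) :
    ent q p (fun ω => (X' ω, Z ω)) = ent q p X' + ent q p Z := by
  unfold mi at hmi
  have e1 := submod q hq p hp0 hp1 X Y Z
  have e2 : ent q p (fun ω => (Y ω, Z ω)) = ent q p (fun ω => (Z ω, Y ω)) :=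
    ent_congr q p _ _ fun a b => by simp only [Prod.mk.injEq]; tauto
  have e3 := ent_mono q hq p hp0 hp1 (fun ω => (X ω, Y ω, Z ω)) (fun ω => (X ω, Y ω))
    (fun a b => by simp only [Prod.mk.injEq]; tauto)
  have e4 := submod q hq p hp0 hp1 X Z X'
  have e5 : ent q p (fun ω => (X ω, X' ω)) = ent q p X :=
    ent_congr q p _ _ fun a b => by have := hX a b; simp only [Prod.mk.injEq]; tauto
  have e6 : ent q p (fun ω => (Z ω, X' ω)) = ent q p (fun ω => (X' ω, Z ω)) :=
    ent_congr q p _ _ fun a b => by simp only [Prod.mk.injEq]; tauto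
  have e7 := ent_mono q hq p hp0 hp1 (fun ω => (X ω, Z ω, X' ω)) (fun ω => (X ω, Z ω))
    (fun a b => by simp only [Prod.mk.injEq]; tauto)
  have e8 := submod q hq p hp0 hp1 X' Z (fun _ => ())
  have e9 : ent q p (fun ω => (X' ω, Z ω, ())) = ent q p (fun ω => (X' ω, Z ω)) :=
    ent_congr q p _ _ fun a b => by simp
  have e10 : ent q p (fun ω => (X' ω, ())) = ent q p X' :=
    ent_congr q p _ _ fun a b => by simp
  have e11 : ent q p (fun ω => (Z ω, ())) = ent q p Z :=
    ent_congr q p _ _ fun a b => by simp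
  have e12 := ent_unit q p hp1
  linarith

lemma det_extend (q : ℕ) (hq : 1 < q) (p : Ω → ℝ) (hp0 : ∀ ω, 0 ≤ p ω) (hp1 : (∑ ω, p ω) = 1)
    {U V T : Type} [Fintype U] [DecidableEq U]
    [Fintype V] [DecidableEq V] [Fintype T] [DecidableEq T]
    (X : Ω → U) (Y : Ω → V) (Z : Ω → T)
    (hYZ : ∀ a b, Y a = Y b → Z a = Z b) (hdet : cent q p X Z = 0) :
    ent q p (fun ω => (X ω, Y ω)) ≤ ent q p Y := by
  unfold cent at hdet
  have hs := submod q hq p hp0 hp1 X Y Z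
  have h1 : ent q p (fun ω => (Y ω, Z ω)) = ent q p Y :=
    ent_congr q p _ _ fun a b => by have := hYZ a b; simp only [Prod.mk.injEq]; tauto
  have h2 := ent_mono q hq p hp0 hp1 (fun ω => (X ω, Y ω, Z ω)) (fun ω => (X ω, Y ω))
    (fun a b => by simp only [Prod.mk.injEq]; tauto)
  linarith

end helpers

theorem single_answer_leaks_nothing_about_undesired
    {Ω MT QT AT FT ST : Type}
    [Fintype Ω] [Fintype MT] [DecidableEq MT] [Fintype QT] [DecidableEq QT]
    [Fintype AT] [DecidableEq AT] [Fintype FT] [DecidableEq FT]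
    [Fintype ST] [DecidableEq ST]
    (N K P L q : ℕ) (hN : 2 ≤ N) (hK : 2 ≤ K) (hP1 : 1 ≤ P) (hP2 : P ≤ K - 1)
    (hL : 1 ≤ L) (hq : IsPrimePow q)
    (p : Ω → ℝ) (hp0 : ∀ ω, 0 ≤ p ω) (hp1 : (∑ ω, p ω) = 1)
    (W : Fin K → Ω → MT) (F : Ω → FT) (S : Ω → ST)
    (Q : Finset (Fin K) → Fin N → Ω → QT)
    (A : Finset (Fin K) → Fin N → Ω → AT)
    (hWk : ∀ k, ent q p (W k) = (L : ℝ))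
    (hWall : ent q p (fun ω (k : Fin K) => W k ω) = (K : ℝ) * L)
    (hQdet : ∀ 𝒫₀ : Finset (Fin K), 𝒫₀.card = P →
      cent q p (fun ω (n : Fin N) => Q 𝒫₀ n ω) F = 0)
    (hAdet : ∀ 𝒫₀ : Finset (Fin K), 𝒫₀.card = P → ∀ n : Fin N,
      cent q p (A 𝒫₀ n) (fun ω => (Q 𝒫₀ n ω, (fun k : Fin K => W k ω), S ω)) = 0)
    (hrel : ∀ 𝒫₀ : Finset (Fin K), 𝒫₀.card = P →
      cent q p (fun ω (k : {x : Fin K // x ∈ 𝒫₀}) => W k.1 ω)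
        (fun ω => ((fun n : Fin N => A 𝒫₀ n ω), F ω)) = 0)
    (hdpriv : ∀ 𝒫₀ : Finset (Fin K), 𝒫₀.card = P →
      mi q p (fun ω (k : {x : Fin K // x ∈ 𝒫₀ᶜ}) => W k.1 ω)
        (fun ω => ((fun n : Fin N => Q 𝒫₀ n ω), (fun n : Fin N => A 𝒫₀ n ω), F ω)) = 0)
    : ∀ (𝒫₀ : Finset (Fin K)), 𝒫₀.card = P → ∀ i : Fin K, i ∉ 𝒫₀ → ∀ T ⊆ 𝒫₀, ∀ n : Fin N,
      (cent q p (W i)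
        (fun ω => ((fun k : {x : Fin K // x ∈ T} => W k.1 ω), Q 𝒫₀ n ω)) =
       cent q p (W i)
        (fun ω => (A 𝒫₀ n ω, (fun k : {x : Fin K // x ∈ T} => W k.1 ω), Q 𝒫₀ n ω))) ∧
      cmi q p (W i) (A 𝒫₀ n)
        (fun ω => ((fun k : {x : Fin K // x ∈ T} => W k.1 ω), Q 𝒫₀ n ω)) = 0 := by
  intro 𝒫₀ hc i hi T hT n
  have hq1 : 1 < q := hq.one_lt
  set Y : Ω → (Fin N → QT) × (Fin N → AT) × FT :=
    fun ω => ((fun n : Fin N => Q 𝒫₀ n ω), (fun n : Fin N => A 𝒫₀ n ω), F ω) with hY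
  set WP : Ω → ({x : Fin K // x ∈ 𝒫₀} → MT) := fun ω k => W k.1 ω with hWP
  set WT : Ω → ({x : Fin K // x ∈ T} → MT) := fun ω k => W k.1 ω with hWT
  have hr : ent q p (fun ω => (WP ω, Y ω)) ≤ ent q p Y :=
    det_extend q hq1 p hp0 hp1 WP Y _ (fun a b h => by
      simp only [hY, Prod.mk.injEq] at h ⊢
      exact h.2) (hrel 𝒫₀ hc)
  have hWTP : ∀ a b, WP a = WP b → WT a = WT b := fun a b h => by
    funext k
    exact congrFun h ⟨k.1, hT k.2⟩
  have hZ1 : ent q p (fun ω => ((A 𝒫₀ n ω, WT ω, Q 𝒫₀ n ω), Y ω)) ≤ ent q p Y := by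
    have := ent_mono q hq1 p hp0 hp1 (fun ω => (WP ω, Y ω))
      (fun ω => ((A 𝒫₀ n ω, WT ω, Q 𝒫₀ n ω), Y ω)) (fun a b h => by
        simp only [hY, Prod.mk.injEq] at h ⊢
        exact ⟨⟨congrFun h.2.2.1 n, hWTP a b h.1, congrFun h.2.1 n⟩, h.2⟩)
    linarith
  have hZ2 : ent q p (fun ω => ((WT ω, Q 𝒫₀ n ω), Y ω)) ≤ ent q p Y := by
    have := ent_mono q hq1 p hp0 hp1 (fun ω => (WP ω, Y ω))
      (fun ω => ((WT ω, Q 𝒫₀ n ω), Y ω)) (fun a b h => by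
        simp only [hY, Prod.mk.injEq] at h ⊢
        exact ⟨⟨hWTP a b h.1, congrFun h.2.1 n⟩, h.2⟩)
    linarith
  have hXi : ∀ a b, (fun k : {x : Fin K // x ∈ 𝒫₀ᶜ} => W k.1 a)
      = (fun k : {x : Fin K // x ∈ 𝒫₀ᶜ} => W k.1 b) → W i a = W i b :=
    fun a b h => congrFun h ⟨i, by simpa using hi⟩
  have k1 := indep_key q hq1 p hp0 hp1 _ (W i) Y _ hXi (hdpriv 𝒫₀ hc) hZ1
  have k2 := indep_key q hq1 p hp0 hp1 _ (W i) Y _ hXi (hdpriv 𝒫₀ hc) hZ2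
  have k3 : ent q p (fun ω => ((W i ω, A 𝒫₀ n ω), (WT ω, Q 𝒫₀ n ω)))
      = ent q p (fun ω => (W i ω, (A 𝒫₀ n ω, WT ω, Q 𝒫₀ n ω))) :=
    ent_congr q p _ _ fun a b => by simp only [Prod.mk.injEq]; tauto
  unfold cmi cent
  constructor <;> linarith

end MMSPIR
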